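/- If a lens (f, φ) : A ⇌ B has underlying functor f an epimorphism in the category Cat of small categories and functors, then the lens is an epimorphism in the category of small categories and lenses: for any lenses (g, γ), (g', γ') : B ⇌ C, if the composite of (f, φ) with (g, γ) equals the composite of (f, φ) with (g', γ') as lenses, then (g, γ) = (g', γ'). -/

import Mathlib

open CategoryTheory

universe u

/-- A functor `F` is a discrete opfibration if for every object `a` of its domain and
every morphism `u : F.obj a ⟶ b` of its codomain, there exists a unique morphism `w`
with domain `a` such that `F.map w = u` (up to the identification of codomains). -/
def IsDiscreteOpfibration {A B : Type u} [SmallCategory A] [SmallCategory B]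
    (F : A ⥤ B) : Prop :=
  ∀ ⦃a : A⦄ ⦃b : B⦄ (u : F.obj a ⟶ b),
    ∃! w : Σ a' : A, a ⟶ a', ∃ h : F.obj w.1 = b, F.map w.2 = u ≫ eqToHom h.symm

/-- A (delta) lens between small categories: a functor together with a lifting
operation satisfying the three lens axioms. `lift u` packages the codomain
`a'` of the chosen lift together with the lift `a ⟶ a'` itself. -/
structure Lens (A B : Type u) [SmallCategory A] [SmallCategory B] where
  /-- the underlying (Get) functor -/
  func : A ⥤ B
  /-- the lifting (Put) operation -/
  lift : ∀ ⦃a : A⦄ ⦃b : B⦄, (func.obj a ⟶ b) → Σ a' : A, a ⟶ a'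
  /-- the codomain of the lift lies over the codomain of the lifted morphism -/
  lift_cod : ∀ ⦃a : A⦄ ⦃b : B⦄ (u : func.obj a ⟶ b), func.obj (lift u).1 = b
  /-- axiom (1): `f (φ (a, u)) = u` -/
  lift_map : ∀ ⦃a : A⦄ ⦃b : B⦄ (u : func.obj a ⟶ b),
      func.map (lift u).2 = u ≫ eqToHom (lift_cod u).symm
  /-- axiom (2): `φ (a, 1) = 1` -/
  lift_id : ∀ a : A, lift (𝟙 (func.obj a)) = ⟨a, 𝟙 a⟩
  /-- axiom (3): `φ (a, v ∘ u) = φ (a', v) ∘ φ (a, u)` -/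
  lift_comp : ∀ ⦃a : A⦄ ⦃b c : B⦄ (u : func.obj a ⟶ b) (v : b ⟶ c),
      lift (u ≫ v) = ⟨(lift (eqToHom (lift_cod u) ≫ v)).1,
        (lift u).2 ≫ (lift (eqToHom (lift_cod u) ≫ v)).2⟩

namespace Lens

variable {A B C : Type u} [SmallCategory A] [SmallCategory B] [SmallCategory C]

theorem lift_eqToHom (L : Lens A B) {a a' : A} (h : a' = a) {b : B}
    (u : L.func.obj a ⟶ b) (h' : L.func.obj a' = L.func.obj a) :
    L.lift (eqToHom h' ≫ u) = ⟨(L.lift u).1, eqToHom h ≫ (L.lift u).2⟩ := by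
  subst h; simp

/-- The identity lens on a small category. -/
def id (A : Type u) [SmallCategory A] : Lens A A where
  func := Functor.id A
  lift _ b u := ⟨b, u⟩
  lift_cod _ _ _ := rfl
  lift_map := by intros; simp
  lift_id := by intros; rfl
  lift_comp := by intros; simp

/-- Composition of lenses: `(L.comp M).lift u = L.lift ((M.lift u).2)`. -/
def comp (L : Lens A B) (M : Lens B C) : Lens A C where
  func := L.func ⋙ M.func
  lift _ _ u := L.lift (M.lift u).2
  lift_cod a c u := by
    show M.func.obj (L.func.obj _) = c
    rw [L.lift_cod]
    exact M.lift_cod u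
  lift_map a c u := by
    show M.func.map (L.func.map _) = _
    rw [L.lift_map, Functor.map_comp, M.lift_map, eqToHom_map]
    simp
  lift_id a := by
    show L.lift (M.lift (𝟙 (M.func.obj (L.func.obj a)))).2 = _
    rw [M.lift_id]
    exact L.lift_id a
  lift_comp a c c' u v := by
    show L.lift (M.lift (u ≫ v)).2 = _
    rw [M.lift_comp u v]
    show L.lift ((M.lift u).2 ≫ (M.lift (eqToHom (M.lift_cod u) ≫ v)).2) = _
    rw [L.lift_comp]
    have key : M.lift (eqToHom (show (L.func ⋙ M.func).obj (L.lift (M.lift u).2).1 = c by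
          show M.func.obj (L.func.obj _) = c; rw [L.lift_cod]; exact M.lift_cod u) ≫ v)
        = ⟨(M.lift (eqToHom (M.lift_cod u) ≫ v)).1,
            eqToHom (L.lift_cod (M.lift u).2) ≫ (M.lift (eqToHom (M.lift_cod u) ≫ v)).2⟩ := by
      rw [show (eqToHom (show (L.func ⋙ M.func).obj (L.lift (M.lift u).2).1 = c by
          show M.func.obj (L.func.obj _) = c; rw [L.lift_cod]; exact M.lift_cod u) ≫ v)
        = eqToHom (congrArg M.func.obj (L.lift_cod (M.lift u).2)) ≫ (eqToHom (M.lift_cod u) ≫ v) by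
          rw [← Category.assoc, eqToHom_trans]]
      exact M.lift_eqToHom (L.lift_cod (M.lift u).2) _ _
    beta_reduce
    rw [key]

/-- A lens is a monomorphism in the category of small categories and lenses if it is
left-cancellable with respect to lens composition. -/
def IsMono (f : Lens A B) : Prop :=
  ∀ ⦃D : Type u⦄ [SmallCategory D], ∀ x y : Lens D A, x.comp f = y.comp f → x = y

/-- A lens is an epimorphism in the category of small categories and lenses if it is
right-cancellable with respect to lens composition. -/
def IsEpi (f : Lens A B) : Prop :=
  ∀ ⦃C : Type u⦄ [SmallCategory C], ∀ x y : Lens B C, f.comp x = f.comp y → x = y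

end Lens

/-!
Morphisms into an indiscrete category carry no data, so cancelling a functor against functors to
the indiscrete category on `Prop` cancels its object map against predicates; hence an epimorphism
in `Cat` is surjective on objects. Now let `f` be a lens surjective on objects. Every
morphism `u` out of `f a` is the image of its lift, so `f` is also surjective on morphisms and
cancels functors. It cancels lifting operations as well: the composite lens lifts `u` at `a` to
`f.lift (x.lift u)`, from which `f` recovers `x.lift u`.
-/

section FunctorCancellation

universe v w v₁ v₂ u₁ u₂

theorem surjective_obj_of_comp_cancel {A : Type u₁} {B : Type u₂} [Category.{v₁} A]
    [Category.{v₂} B] (F : A ⥤ B)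
    (hF : ∀ ⦃C : Type w⦄ [Category.{v} C], ∀ k k' : B ⥤ C, F ⋙ k = F ⋙ k' → k = k') :
    Function.Surjective F.obj := by
  refine Function.surjective_of_right_cancellable_Prop fun p q hpq => ?_
  -- `ULift` and `ULiftHom` only move the indiscrete category on `Prop` to the universes of `C`.
  let classify (r : B → Prop) : B ⥤ ULiftHom.{v} (Codiscrete (ULift.{w} Prop)) :=
    Codiscrete.functor (ULift.up ∘ r) ⋙ ULiftHom.up
  have hcomp : F ⋙ classify p = F ⋙ classify q :=
    congrArg (fun r : A → Prop => Codiscrete.functor (ULift.up ∘ r) ⋙ ULiftHom.up) hpq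
  have hclassify : classify p = classify q := hF _ _ hcomp
  funext b
  exact congrArg (fun k => (k.obj b).objDown.as.down) hclassify

end FunctorCancellation

namespace Lens

variable {A B : Type u} [SmallCategory A] [SmallCategory B]

protected theorem ext {L M : Lens A B} (hfunc : L.func = M.func)
    (hlift : ∀ ⦃a : A⦄ ⦃b : B⦄ (u : L.func.obj a ⟶ b) (v : M.func.obj a ⟶ b),
      u ≍ v → L.lift u = M.lift v) :
    L = M := by
  obtain ⟨F, φ, _, _, _, _⟩ := L
  obtain ⟨G, ψ, _, _, _, _⟩ := M
  obtain rfl : F = G := hfunc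
  obtain rfl : φ = ψ := by
    funext a b u
    exact hlift u u HEq.rfl
  rfl

theorem lift_congr {L M : Lens A B} (h : L = M) {a : A} {b : B} {u : L.func.obj a ⟶ b}
    {v : M.func.obj a ⟶ b} (huv : u ≍ v) : L.lift u = M.lift v := by
  subst h
  rw [eq_of_heq huv]

theorem map_lift (L : Lens A B) {a : A} {b : B} (u : L.func.obj a ⟶ b) :
    (⟨L.func.obj (L.lift u).1, L.func.map (L.lift u).2⟩ : Σ b' : B, L.func.obj a ⟶ b') =
      ⟨b, u⟩ :=
  Sigma.ext (L.lift_cod u) ((heq_of_eq (L.lift_map u)).trans (comp_eqToHom_heq _ _))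

theorem comp_cancel_of_surjective_obj {f : Lens A B} (hf : Function.Surjective f.func.obj)
    {C : Type*} [Category* C] {k k' : B ⥤ C} (h : f.func ⋙ k = f.func ⋙ k') : k = k' := by
  refine Functor.hext (hf.forall.2 fun a => Functor.congr_obj h a) fun b c u => ?_
  obtain ⟨a, rfl⟩ := hf b
  obtain ⟨a', w, huw⟩ : ∃ (a' : A) (w : a ⟶ a'),
      (⟨f.func.obj a', f.func.map w⟩ : Σ b' : B, f.func.obj a ⟶ b') = ⟨c, u⟩ :=
    ⟨_, _, f.map_lift u⟩
  cases huw
  exact Functor.hcongr_hom h w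

theorem isEpi_of_surjective_obj {f : Lens A B} (hf : Function.Surjective f.func.obj) :
    f.IsEpi := by
  intro C _ x y h
  refine Lens.ext (comp_cancel_of_surjective_obj hf (congrArg Lens.func h)) fun b c u v huv => ?_
  obtain ⟨a, rfl⟩ := hf b
  have hlift : f.lift (x.lift u).2 = f.lift (y.lift v).2 := lift_congr h huv
  calc
    x.lift u = ⟨f.func.obj (f.lift (x.lift u).2).1, f.func.map (f.lift (x.lift u).2).2⟩ :=
      (f.map_lift (x.lift u).2).symm
    _ = ⟨f.func.obj (f.lift (y.lift v).2).1, f.func.map (f.lift (y.lift v).2).2⟩ := by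
      rw [hlift]
    _ = y.lift v := f.map_lift (y.lift v).2

end Lens

/-- If the underlying functor of a lens is an epimorphism in the category `Cat` of small
categories and functors, then the lens is an epimorphism in the category of small
categories and lenses. -/
theorem lens_epi_of_cat_epi {A B : Type u} [SmallCategory A] [SmallCategory B]
    (f : Lens A B)
    (hepi : ∀ ⦃C : Type u⦄ [SmallCategory C],
      ∀ k k' : B ⥤ C, f.func ⋙ k = f.func ⋙ k' → k = k') :
    f.IsEpi := by
  exact Lens.isEpi_of_surjective_obj (surjective_obj_of_comp_cancel f.func hepi)
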